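/- (Integral bound on local maximal eigenvalue comparison) Let W be a matrix A_2 weight on ℝ^d and Q a cube. Define N_Q(x) = sup_{R : x ∈ R ⊆ Q} ‖W^{1/2}(x)(m_R(W^{-1}))^{1/2}‖, the supremum over subcubes R of Q containing x. Then ∫_Q (N_Q(x))² dx ≲ |Q| [W]_{A_2}, with implied constant depending only on n and d. -/

import Mathlib

open MeasureTheory Matrix
open scoped ComplexOrder

/-- The operator norm on `n × n` complex matrices induced by the Euclidean norm. -/
noncomputable def matNorm {n : ℕ} (M : Matrix (Fin n) (Fin n) ℂ) : ℝ :=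
  ‖(Matrix.toEuclideanCLM (𝕜 := ℂ) M : EuclideanSpace ℂ (Fin n) →L[ℂ] EuclideanSpace ℂ (Fin n))‖

/-- The Euclidean norm of a vector in `ℂⁿ`. -/
noncomputable def vecNorm {n : ℕ} (v : Fin n → ℂ) : ℝ :=
  ‖(WithLp.equiv 2 (Fin n → ℂ)).symm v‖

/-- A (half-open, axis-parallel) cube in `ℝ^d`. -/
def IsCube {d : ℕ} (I : Set (Fin d → ℝ)) : Prop :=
  ∃ (a : Fin d → ℝ) (ℓ : ℝ), 0 < ℓ ∧ I = Set.univ.pi fun i => Set.Ico (a i) (a i + ℓ)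

/-- The average `(1/|I|) ∫_I g` of a scalar function over a set `I`. -/
noncomputable def avg {d : ℕ} (I : Set (Fin d → ℝ)) (g : (Fin d → ℝ) → ℝ) : ℝ :=
  (volume I).toReal⁻¹ * ∫ x in I, g x

/-- The (entrywise) average of a vector-valued function over a set `I`. -/
noncomputable def vavg {d n : ℕ} (I : Set (Fin d → ℝ)) (f : (Fin d → ℝ) → Fin n → ℂ) :
    Fin n → ℂ :=
  fun i => (volume I).toReal⁻¹ • (∫ x in I, f x i)

/-- The (entrywise) average of a matrix-valued function over a set `I`. -/
noncomputable def mavg {d n : ℕ} (I : Set (Fin d → ℝ))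
    (F : (Fin d → ℝ) → Matrix (Fin n) (Fin n) ℂ) : Matrix (Fin n) (Fin n) ℂ :=
  Matrix.of fun i j => (volume I).toReal⁻¹ • (∫ x in I, F x i j)

open scoped ENNReal

/- The operator norm is comparable to the Frobenius norm, for which
`‖W^{1/2}(x) (m_R V)^{1/2}‖² = tr (W(x) m_R V)`, where `V = W⁻¹`. By the one-third trick every
subcube `R` of `Q` lies in a comparable dyadic descendant of one of `2 ^ d` cubes of side
`3 * Q.side`, so it suffices to bound the supremum over a dyadic tree. There one stops at the
maximal descendants `R` of `S` with `tr ((m_S V)⁻¹ m_R V) > 2n`. As this trace is the average over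
`R` of a function whose average over `S` is `n`, the stopping cubes occupy at most half of `S`.
Before stopping, `tr (W(x) m_R V) ≤ tr ((m_S V)⁻¹ m_R V) tr (W(x) m_S V) ≤ 2n tr (W(x) m_S V)`, and
the average over `S` of the last trace is `tr (m_S W m_S V)`, which is controlled by the `A₂`
characteristic. Truncating the tree at finitely many generations, the iteration becomes an
induction on their number. -/

/-- A tree of measurable cells in `α`, each of which is partitioned by the cells of its children,
indexed by `ι`; it abstracts the dyadic subcubes of a cube. -/
structure PartitionTree (T ι α : Type*) [MeasurableSpace α] where
  /-- The set attached to a node. -/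
  cell : T → Set α
  /-- The children of a node. -/
  child : T → ι → T
  measurableSet_cell (t : T) : MeasurableSet (cell t)
  pairwise_disjoint_child (t : T) : Pairwise (Function.onFun Disjoint fun e => cell (child t e))
  iUnion_child (t : T) : ⋃ e, cell (child t e) = cell t

namespace PartitionTree

variable {T ι α : Type*} [MeasurableSpace α] (P : PartitionTree T ι α)

/-- The `k`-th generation of descendants of a node. -/
def descendants : ℕ → T → Set T
  | 0, t => {t}
  | k + 1, t => ⋃ e, descendants k (P.child t e)

/-- The maximal function of the family `f` localized at a node and truncated to the descendants of
generation less than `k`. -/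
noncomputable def truncMax (f : T → α → ℝ≥0∞) : ℕ → T → α → ℝ≥0∞
  | 0, _, _ => 0
  | k + 1, t, x => f t x ⊔ ⨆ e, (P.cell (P.child t e)).indicator (truncMax f k (P.child t e)) x

variable {P}

theorem cell_child_subset (t : T) (e : ι) : P.cell (P.child t e) ⊆ P.cell t :=
  (Set.subset_iUnion _ e).trans (P.iUnion_child t).subset

theorem cell_subset_of_mem_descendants {k : ℕ} {s t : T} (hs : s ∈ P.descendants k t) :
    P.cell s ⊆ P.cell t := by
  induction k generalizing t with
  | zero => rw [show s = t from hs]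
  | succ k ih =>
    obtain ⟨e, he⟩ := Set.mem_iUnion.1 hs
    exact (ih he).trans (cell_child_subset t e)

theorem exists_mem_descendants_mem_cell (k : ℕ) {t : T} {x : α} (hx : x ∈ P.cell t) :
    ∃ s ∈ P.descendants k t, x ∈ P.cell s := by
  induction k generalizing t with
  | zero => exact ⟨t, rfl, hx⟩
  | succ k ih =>
    rw [← P.iUnion_child t] at hx
    obtain ⟨e, he⟩ := Set.mem_iUnion.1 hx
    obtain ⟨s, hs, hxs⟩ := ih he
    exact ⟨s, Set.mem_iUnion.2 ⟨e, hs⟩, hxs⟩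

theorem setLIntegral_eq_tsum_child [Countable ι] (μ : Measure α) (t : T) (g : α → ℝ≥0∞) :
    ∫⁻ x in P.cell t, g x ∂μ = ∑' e, ∫⁻ x in P.cell (P.child t e), g x ∂μ := by
  rw [← P.iUnion_child t, lintegral_iUnion (fun e => P.measurableSet_cell _)
    (P.pairwise_disjoint_child t)]

theorem truncMax_succ_of_mem_child (f : T → α → ℝ≥0∞) (k : ℕ) {t : T} {e : ι} {x : α}
    (hx : x ∈ P.cell (P.child t e)) :
    P.truncMax f (k + 1) t x = f t x ⊔ P.truncMax f k (P.child t e) x := by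
  rw [truncMax]
  congr 1
  refine le_antisymm (iSup_le fun e' => ?_) ?_
  · rcases eq_or_ne e e' with rfl | hne
    · rw [Set.indicator_of_mem hx]
    · rw [Set.indicator_of_notMem (Set.disjoint_left.1 (P.pairwise_disjoint_child t hne) hx)]
      exact zero_le
  · exact le_iSup_of_le e (Set.indicator_of_mem hx _).ge

theorem le_truncMax_of_mem_descendants (f : T → α → ℝ≥0∞) {k : ℕ} {s t : T}
    (hs : s ∈ P.descendants k t) {x : α} (hx : x ∈ P.cell s) :
    f s x ≤ P.truncMax f (k + 1) t x := by
  induction k generalizing t with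
  | zero => rw [show s = t from hs, truncMax]; exact le_sup_left
  | succ k ih =>
    obtain ⟨e, he⟩ := Set.mem_iUnion.1 hs
    rw [truncMax_succ_of_mem_child f (k + 1) (cell_subset_of_mem_descendants he hx)]
    exact (ih he).trans le_sup_right

theorem truncMax_le_succ (f : T → α → ℝ≥0∞) (k : ℕ) (t : T) (x : α) :
    P.truncMax f k t x ≤ P.truncMax f (k + 1) t x := by
  induction k generalizing t x with
  | zero => exact zero_le
  | succ k ih =>
    exact sup_le_sup le_rfl (iSup_mono fun e => Set.indicator_le_indicator (ih _ _))

theorem aemeasurable_truncMax [Countable ι] {μ : Measure α} {f : T → α → ℝ≥0∞}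
    (hf : ∀ t, AEMeasurable (f t) μ) (k : ℕ) (t : T) : AEMeasurable (P.truncMax f k t) μ := by
  induction k generalizing t with
  | zero => exact aemeasurable_const
  | succ k ih =>
    exact (hf t).sup (.iSup fun e => (ih _).indicator (P.measurableSet_cell _))

section StoppingTime

variable [Countable ι] {μ : Measure α} {f u : T → α → ℝ≥0∞} {A N : ℝ≥0∞}

theorem lintegral_truncMax_succ_sup_le {k : ℕ} {s : T} {g : α → ℝ≥0∞} {a b : ℝ≥0∞}
    {v w : α → ℝ≥0∞} (hfg : ∀ x ∈ P.cell s, f s x ≤ g x)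
    (hchild : ∀ e, ∫⁻ x in P.cell (P.child s e), P.truncMax f k (P.child s e) x ⊔ g x ∂μ ≤
      a * ∫⁻ x in P.cell (P.child s e), v x ∂μ + b * ∫⁻ x in P.cell (P.child s e), w x ∂μ) :
    ∫⁻ x in P.cell s, P.truncMax f (k + 1) s x ⊔ g x ∂μ ≤
      a * ∫⁻ x in P.cell s, v x ∂μ + b * ∫⁻ x in P.cell s, w x ∂μ := by
  simp only [setLIntegral_eq_tsum_child μ s, ← ENNReal.tsum_mul_left, ← ENNReal.tsum_add]
  refine ENNReal.tsum_le_tsum fun e => le_trans ?_ (hchild e)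
  refine setLIntegral_mono' (P.measurableSet_cell _) fun x hx => ?_
  rw [truncMax_succ_of_mem_child f k hx]
  exact sup_le (sup_le ((hfg x (cell_child_subset s e hx)).trans le_sup_right) le_sup_left)
    le_sup_right

theorem two_mul_setLIntegral_add_le {s : Set α} (hs : μ s ≠ ∞) {g v : α → ℝ≥0∞}
    (hg : ⨍⁻ x in s, g x ∂μ ≤ A) (hv : ⨍⁻ x in s, v x ∂μ ≤ N) :
    2 * N * ∫⁻ x in s, g x ∂μ + 2 * A * ∫⁻ x in s, v x ∂μ ≤ 4 * N * A * μ s := calc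
  _ = 2 * N * (μ s * ⨍⁻ x in s, g x ∂μ) + 2 * A * (μ s * ⨍⁻ x in s, v x ∂μ) := by
    simp only [measure_mul_setLAverage _ hs]
  _ ≤ 2 * N * (μ s * A) + 2 * A * (μ s * N) := by gcongr
  _ = _ := by ring

/- Either the average of `u t` over `cell s` is at most `2 * N`, so that `f s` is absorbed by
`2 * N * f t` and one passes to the children, or `s` is a stopping node: then the process restarts
with `s` in place of `t`, at a cost `4 * N * A * μ (cell s)` paid for by
`2 * A * ∫⁻ x in cell s, u t x`. -/
theorem lintegral_truncMax_sup_le (hμ : ∀ t, μ (P.cell t) ≠ ∞) (hfm : ∀ t, AEMeasurable (f t) μ)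
    (hf : ∀ t, ⨍⁻ x in P.cell t, f t x ∂μ ≤ A) (hu : ∀ t, ⨍⁻ x in P.cell t, u t x ∂μ ≤ N)
    (hfu : ∀ s t x, f s x ≤ (⨍⁻ y in P.cell s, u t y ∂μ) * f t x) (k : ℕ) (s t : T) :
    ∫⁻ x in P.cell s, P.truncMax f k s x ⊔ 2 * N * f t x ∂μ ≤
      2 * N * ∫⁻ x in P.cell s, f t x ∂μ + 2 * A * ∫⁻ x in P.cell s, u t x ∂μ := by
  have hconst (s t : T) :
      ∫⁻ x in P.cell s, 2 * N * f t x ∂μ = 2 * N * ∫⁻ x in P.cell s, f t x ∂μ :=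
    lintegral_const_mul'' _ (hfm t).restrict
  induction k generalizing s t with
  | zero =>
    simp only [truncMax, zero_le, sup_of_le_right, hconst]
    exact le_self_add
  | succ k ih =>
    have descend {s t : T} (h : ⨍⁻ y in P.cell s, u t y ∂μ ≤ 2 * N) :
        ∫⁻ x in P.cell s, P.truncMax f (k + 1) s x ⊔ 2 * N * f t x ∂μ ≤
          2 * N * ∫⁻ x in P.cell s, f t x ∂μ + 2 * A * ∫⁻ x in P.cell s, u t x ∂μ :=
      lintegral_truncMax_succ_sup_le (fun x _ => (hfu s t x).trans (by gcongr)) fun e => ih _ t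
    rcases le_or_gt (⨍⁻ y in P.cell s, u t y ∂μ) (2 * N) with hle | hgt
    · exact descend hle
    have restart : ∫⁻ x in P.cell s, P.truncMax f (k + 1) s x ∂μ ≤
        2 * A * ∫⁻ x in P.cell s, u t x ∂μ := calc
      _ ≤ ∫⁻ x in P.cell s, P.truncMax f (k + 1) s x ⊔ 2 * N * f s x ∂μ :=
        lintegral_mono fun x => le_sup_left
      _ ≤ 2 * N * ∫⁻ x in P.cell s, f s x ∂μ + 2 * A * ∫⁻ x in P.cell s, u s x ∂μ :=
        descend ((hu s).trans (le_mul_of_one_le_left' one_le_two))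
      _ ≤ 4 * N * A * μ (P.cell s) := two_mul_setLIntegral_add_le (hμ s) (hf s) (hu s)
      _ = 2 * A * (μ (P.cell s) * (2 * N)) := by ring
      _ ≤ 2 * A * (μ (P.cell s) * ⨍⁻ y in P.cell s, u t y ∂μ) := by gcongr
      _ = _ := by rw [measure_mul_setLAverage _ (hμ s)]
    calc
      _ ≤ ∫⁻ x in P.cell s, 2 * N * f t x + P.truncMax f (k + 1) s x ∂μ :=
        lintegral_mono fun x => sup_le le_add_self le_self_add
      _ = 2 * N * ∫⁻ x in P.cell s, f t x ∂μ + ∫⁻ x in P.cell s, P.truncMax f (k + 1) s x ∂μ := by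
        rw [lintegral_add_left' ((hfm t).restrict.const_mul _), hconst]
      _ ≤ _ := by gcongr

theorem lintegral_iSup_truncMax_le (hμ : ∀ t, μ (P.cell t) ≠ ∞) (hfm : ∀ t, AEMeasurable (f t) μ)
    (hf : ∀ t, ⨍⁻ x in P.cell t, f t x ∂μ ≤ A) (hu : ∀ t, ⨍⁻ x in P.cell t, u t x ∂μ ≤ N)
    (hfu : ∀ s t x, f s x ≤ (⨍⁻ y in P.cell s, u t y ∂μ) * f t x) (t : T) :
    ∫⁻ x in P.cell t, ⨆ k, P.truncMax f k t x ∂μ ≤ 4 * N * A * μ (P.cell t) := by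
  rw [lintegral_iSup' (fun k => (aemeasurable_truncMax hfm k t).restrict)
    (.of_forall fun x => monotone_nat_of_le_succ fun k => truncMax_le_succ f k t x)]
  refine iSup_le fun k => ?_
  calc
    _ ≤ ∫⁻ x in P.cell t, P.truncMax f k t x ⊔ 2 * N * f t x ∂μ :=
      lintegral_mono fun x => le_sup_left
    _ ≤ 2 * N * ∫⁻ x in P.cell t, f t x ∂μ + 2 * A * ∫⁻ x in P.cell t, u t x ∂μ :=
      lintegral_truncMax_sup_le hμ hfm hf hu hfu k t t
    _ ≤ _ := two_mul_setLIntegral_add_le (hμ t) (hf t) (hu t)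

end StoppingTime

end PartitionTree

/-- A half-open axis-parallel cube in `ℝ^d`, given by its lower corner and its side length. -/
structure HalfOpenCube (d : ℕ) where
  /-- The lower corner. -/
  corner : Fin d → ℝ
  /-- The side length. -/
  side : ℝ
  side_pos : 0 < side

namespace HalfOpenCube

variable {d : ℕ}

/-- The set of points of a cube, in the form used by `IsCube`. -/
def toSet (Q : HalfOpenCube d) : Set (Fin d → ℝ) :=
  Set.univ.pi fun i => Set.Ico (Q.corner i) (Q.corner i + Q.side)

instance : Coe (HalfOpenCube d) (Set (Fin d → ℝ)) := ⟨toSet⟩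

theorem mem_toSet {Q : HalfOpenCube d} {x : Fin d → ℝ} :
    x ∈ Q.toSet ↔ ∀ i, Q.corner i ≤ x i ∧ x i < Q.corner i + Q.side := by
  simp only [toSet, Set.mem_pi, Set.mem_univ, true_imp_iff, Set.mem_Ico]

theorem corner_mem (Q : HalfOpenCube d) : Q.corner ∈ Q.toSet :=
  mem_toSet.2 fun _ => ⟨le_rfl, lt_add_of_pos_right _ Q.side_pos⟩

theorem isCube (Q : HalfOpenCube d) : IsCube Q.toSet :=
  ⟨Q.corner, Q.side, Q.side_pos, rfl⟩

theorem exists_toSet_eq {I : Set (Fin d → ℝ)} (hI : IsCube I) : ∃ Q : HalfOpenCube d, I = Q := by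
  obtain ⟨a, l, hl, rfl⟩ := hI
  exact ⟨⟨a, l, hl⟩, rfl⟩

theorem measurableSet (Q : HalfOpenCube d) : MeasurableSet Q.toSet :=
  .univ_pi fun _ => measurableSet_Ico

theorem volume_eq (Q : HalfOpenCube d) : volume Q.toSet = ENNReal.ofReal Q.side ^ d := by
  simp [toSet, Real.volume_pi_Ico]

theorem volume_ne_zero (Q : HalfOpenCube d) : volume Q.toSet ≠ 0 := by
  rw [volume_eq]
  exact pow_ne_zero _ (ENNReal.ofReal_pos.2 Q.side_pos).ne'

theorem volume_ne_top (Q : HalfOpenCube d) : volume Q.toSet ≠ ∞ := by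
  rw [volume_eq]
  exact ENNReal.pow_ne_top ENNReal.ofReal_ne_top

theorem subset_iff {R S : HalfOpenCube d} :
    R.toSet ⊆ S ↔
      ∀ i, S.corner i ≤ R.corner i ∧ R.corner i + R.side ≤ S.corner i + S.side := by
  have hR (i : Fin d) : R.corner i < R.corner i + R.side := lt_add_of_pos_right _ R.side_pos
  have hne (h : ∃ i, Set.Ico (R.corner i) (R.corner i + R.side) = ∅) : False :=
    h.elim fun i hi => Set.Ico_eq_empty_iff.1 hi (hR i)
  rw [toSet, toSet, Set.univ_pi_subset_univ_pi_iff, or_iff_left hne]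
  exact forall_congr' fun i => Set.Ico_subset_Ico_iff (hR i)

theorem setLAverage_le_pow_mul {R S : HalfOpenCube d} (hRS : R.toSet ⊆ S) {c : NNReal}
    (hside : S.side ≤ c * R.side) (g : (Fin d → ℝ) → ℝ≥0∞) :
    ⨍⁻ x in R, g x ∂volume ≤ c ^ d * ⨍⁻ x in S, g x ∂volume := by
  have hvol : volume S.toSet ≤ c ^ d * volume R.toSet := by
    rw [volume_eq, volume_eq, ← mul_pow, ← ENNReal.ofReal_coe_nnreal,
      ← ENNReal.ofReal_mul c.coe_nonneg]
    gcongr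
  rw [setLAverage_eq]
  refine ENNReal.div_le_of_le_mul ?_
  calc
    _ ≤ ∫⁻ x in S, g x := lintegral_mono_set hRS
    _ = volume S.toSet * ⨍⁻ x in S, g x ∂volume :=
      (measure_mul_setLAverage _ S.volume_ne_top).symm
    _ ≤ c ^ d * volume R.toSet * ⨍⁻ x in S, g x ∂volume := by gcongr
    _ = _ := by ring

theorem aemeasurable_of_forall_restrict {β : Type*} [MeasurableSpace β] {μ : Measure (Fin d → ℝ)}
    {g : (Fin d → ℝ) → β} (hg : ∀ Q : HalfOpenCube d, AEMeasurable g (μ.restrict Q)) :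
    AEMeasurable g μ := by
  let centered (k : ℕ) : HalfOpenCube d := ⟨fun _ => -(k + 1), 2 * (k + 1), by positivity⟩
  have hcover : ⋃ k, (centered k : Set (Fin d → ℝ)) = Set.univ := by
    refine Set.eq_univ_of_forall fun x => Set.mem_iUnion.2 ?_
    obtain ⟨k, hk⟩ := exists_nat_ge ‖x‖
    refine ⟨k, mem_toSet.2 fun i => ?_⟩
    have := abs_le.1 ((norm_le_pi_norm x i).trans hk)
    constructor <;> linarith
  rw [← Measure.restrict_univ (μ := μ), ← hcover]
  exact aemeasurable_iUnion_iff.2 fun k => hg _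

/-- The dyadic child of a cube in the corner selected by `e`. -/
noncomputable def child (Q : HalfOpenCube d) (e : Fin d → Bool) : HalfOpenCube d where
  corner i := Q.corner i + if e i then Q.side / 2 else 0
  side := Q.side / 2
  side_pos := half_pos Q.side_pos

theorem iUnion_child (Q : HalfOpenCube d) : ⋃ e, (Q.child e).toSet = Q := by
  refine (Set.iUnion_subset fun e => subset_iff.2 fun i => ?_).antisymm fun x hx => ?_
  · have := Q.side_pos
    simp only [child]
    split_ifs <;> constructor <;> linarith
  · refine Set.mem_iUnion.2 ⟨fun i => decide (Q.corner i + Q.side / 2 ≤ x i),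
      mem_toSet.2 fun i => ?_⟩
    have := mem_toSet.1 hx i
    simp only [child, decide_eq_true_eq]
    split_ifs <;> constructor <;> linarith

theorem pairwise_disjoint_child (Q : HalfOpenCube d) :
    Pairwise (Function.onFun Disjoint fun e => (Q.child e).toSet) := by
  refine fun e e' hne => Set.disjoint_left.2 fun x hx hx' => hne (funext fun i => ?_)
  have h := mem_toSet.1 hx i
  have h' := mem_toSet.1 hx' i
  simp only [child] at h h'
  cases he : e i <;> cases he' : e' i <;> simp only [he, he', if_true, Bool.false_eq_true,
    if_false] at h h' ⊢ <;> linarith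

/-- The dyadic tree on cubes: the children of a cube are obtained by halving its side. -/
noncomputable def dyadicTree (d : ℕ) : PartitionTree (HalfOpenCube d) (Fin d → Bool)
    (Fin d → ℝ) where
  cell := toSet
  child := child
  measurableSet_cell := measurableSet
  pairwise_disjoint_child := pairwise_disjoint_child
  iUnion_child := iUnion_child

theorem side_mul_two_pow_of_mem_descendants {k : ℕ} {S Q : HalfOpenCube d}
    (hS : S ∈ (dyadicTree d).descendants k Q) : S.side * 2 ^ k = Q.side := by
  induction k generalizing Q with
  | zero => rw [show S = Q from hS, pow_zero, mul_one]
  | succ k ih =>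
    obtain ⟨e, he⟩ := Set.mem_iUnion.1 hS
    rw [pow_succ, ← mul_assoc, ih he]
    exact div_mul_cancel₀ _ two_ne_zero

theorem corner_eq_of_mem_descendants {k : ℕ} {S Q : HalfOpenCube d}
    (hS : S ∈ (dyadicTree d).descendants k Q) (i : Fin d) :
    ∃ m : ℤ, S.corner i = Q.corner i + m * S.side := by
  induction k generalizing Q with
  | zero => exact ⟨0, by rw [show S = Q from hS, Int.cast_zero, zero_mul, add_zero]⟩
  | succ k ih =>
    obtain ⟨e, he⟩ := Set.mem_iUnion.1 hS
    obtain ⟨m, hm⟩ := ih he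
    have hside : S.side * 2 ^ k = Q.side / 2 := side_mul_two_pow_of_mem_descendants he
    refine ⟨(if e i then 2 ^ k else 0) + m, ?_⟩
    have hcorner : ((dyadicTree d).child Q e).corner i =
        Q.corner i + if e i then Q.side / 2 else 0 := rfl
    rw [hm, hcorner, ← hside]
    split_ifs <;> push_cast <;> ring

/- `2 ^ k` is not divisible by `3`, so the grid `p + h ℤ` and its translate by `2 ^ k * h / 3` stay
at distance at least `h / 3` from each other. -/
theorem exists_grid_disjoint_Ioo (k : ℕ) {h l : ℝ} (hh : 0 < h) (hl : l ≤ h / 3) (p r : ℝ) :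
    ∃ b : Bool, ∀ m : ℤ,
      p - (if b then 2 ^ k * h / 3 else 0) + m * h ∉ Set.Ioo r (r + l) := by
  by_contra! hcon
  obtain ⟨m, hm, hm'⟩ := hcon false
  obtain ⟨m', hn, hn'⟩ := hcon true
  simp only [Bool.false_eq_true, if_false, if_true] at hm hm' hn hn'
  have hlt : ((3 * (m - m') + 2 ^ k : ℤ) : ℝ) * h < 1 * h := by push_cast; linarith
  have hgt : (-1) * h < ((3 * (m - m') + 2 ^ k : ℤ) : ℝ) * h := by push_cast; linarith
  have hlt' : 3 * (m - m') + 2 ^ k < 1 := by exact_mod_cast lt_of_mul_lt_mul_right hlt hh.le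
  have hgt' : -1 < 3 * (m - m') + 2 ^ k := by exact_mod_cast lt_of_mul_lt_mul_right hgt hh.le
  have hdvd : (3 : ℤ) ∣ 2 ^ k := ⟨m' - m, by lia⟩
  have : (3 : ℤ) ∣ 2 := Int.prime_three.dvd_of_dvd_pow hdvd
  lia

/-- The cube of side three times that of `Q` whose lower corner is that of `Q`, translated by
`-Q.side` in the coordinates selected by `b`. Every subcube of `Q` is well approximated by a dyadic
descendant of one of these `2 ^ d` cubes. -/
def shiftedTriple (Q : HalfOpenCube d) (b : Fin d → Bool) : HalfOpenCube d where
  corner i := Q.corner i - if b i then Q.side else 0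
  side := 3 * Q.side
  side_pos := mul_pos three_pos Q.side_pos

theorem subset_shiftedTriple (Q : HalfOpenCube d) (b : Fin d → Bool) :
    Q.toSet ⊆ Q.shiftedTriple b := by
  refine subset_iff.2 fun i => ?_
  have := Q.side_pos
  simp only [shiftedTriple]
  split_ifs <;> constructor <;> linarith

theorem volume_shiftedTriple (Q : HalfOpenCube d) (b : Fin d → Bool) :
    volume (Q.shiftedTriple b).toSet = 3 ^ d * volume Q.toSet := by
  rw [volume_eq, volume_eq, shiftedTriple, ENNReal.ofReal_mul three_pos.le, mul_pow,
    ENNReal.ofReal_ofNat]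

theorem exists_two_pow_scale {l L : ℝ} (hl : 0 < l) (hlL : l ≤ L) :
    ∃ k : ℕ, l * 2 ^ k ≤ L ∧ L ≤ 2 * l * 2 ^ k := by
  obtain ⟨k, hle, hlt⟩ := exists_nat_pow_near ((one_le_div hl).2 hlL) one_lt_two
  rw [le_div_iff₀ hl] at hle
  rw [div_lt_iff₀ hl, pow_succ] at hlt
  exact ⟨k, by linarith, by linarith⟩

theorem subset_of_mem_descendants {k : ℕ} {R S Q : HalfOpenCube d}
    (hS : S ∈ (dyadicTree d).descendants k Q) (hRS : R.corner ∈ S.toSet)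
    (hgrid : ∀ (i : Fin d) (m : ℤ),
      Q.corner i + m * S.side ∉ Set.Ioo (R.corner i) (R.corner i + R.side)) :
    R.toSet ⊆ S := by
  refine subset_iff.2 fun i => ?_
  obtain ⟨hle, hlt⟩ := mem_toSet.1 hRS i
  obtain ⟨m, hm⟩ := corner_eq_of_mem_descendants hS i
  have hupper : Q.corner i + ((m + 1 : ℤ) : ℝ) * S.side = S.corner i + S.side := by
    rw [hm]; push_cast; ring
  have hnotMem := hgrid i (m + 1)
  rw [hupper] at hnotMem
  exact ⟨hle, not_lt.1 fun hcross => hnotMem ⟨hlt, hcross⟩⟩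

/- The side length `h` of the generation is chosen with `3 * R.side ≤ h ≤ 6 * R.side`. The only
cubes `R ⊆ Q` with `Q.side < R.side` occur for `d = 0`. -/
theorem exists_descendant_superset {R Q : HalfOpenCube d} (hRQ : R.toSet ⊆ Q) :
    ∃ (b : Fin d → Bool) (k : ℕ), ∃ S ∈ (dyadicTree d).descendants k (Q.shiftedTriple b),
      R.toSet ⊆ S ∧ S.side ≤ 6 * R.side := by
  rcases lt_or_ge Q.side R.side with hlarge | hside
  · refine ⟨fun _ => false, 0, _, rfl, hRQ.trans (Q.subset_shiftedTriple _), ?_⟩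
    simp only [shiftedTriple]
    linarith [R.side_pos]
  obtain ⟨k, hkR, hkQ⟩ := exists_two_pow_scale R.side_pos hside
  have hpow : (0 : ℝ) < 2 ^ k := by positivity
  set h : ℝ := 3 * Q.side / 2 ^ k with h_def
  have hh : 0 < h := by have := Q.side_pos; positivity
  have hQ : 2 ^ k * h / 3 = Q.side := by rw [h_def]; field_simp
  have hRh : R.side ≤ h / 3 := by rw [h_def, div_div, le_div_iff₀ (by positivity)]; linarith
  have hhR : h ≤ 6 * R.side := by rw [h_def, div_le_iff₀ hpow]; linarith
  choose b hb using fun i => exists_grid_disjoint_Ioo k hh hRh (Q.corner i) (R.corner i)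
  obtain ⟨S, hS, hmem⟩ := (dyadicTree d).exists_mem_descendants_mem_cell k
    (Q.subset_shiftedTriple b (hRQ R.corner_mem))
  have hSh : S.side = h := (eq_div_iff hpow.ne').2 (side_mul_two_pow_of_mem_descendants hS)
  rw [hQ, ← hSh] at hb
  exact ⟨b, k, S, hS, subset_of_mem_descendants hS hmem hb, hSh ▸ hhR⟩

section MaximalFunction

variable {f u : HalfOpenCube d → (Fin d → ℝ) → ℝ≥0∞} {A N K : ℝ≥0∞}

theorem le_mul_sum_iSup_truncMax
    (hK : ∀ (R S : HalfOpenCube d) (x), R.toSet ⊆ S → S.side ≤ 6 * R.side →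
      f R x ≤ K * f S x)
    {R Q : HalfOpenCube d} {x : Fin d → ℝ} (hx : x ∈ R.toSet)
    (hRQ : R.toSet ⊆ Q) :
    f R x ≤ K * ∑ b, ⨆ k, (dyadicTree d).truncMax f k (Q.shiftedTriple b) x := by
  obtain ⟨b, k, S, hS, hRS, hside⟩ := exists_descendant_superset hRQ
  calc
    f R x ≤ K * f S x := hK R S x hRS hside
    _ ≤ K * ⨆ k, (dyadicTree d).truncMax f k (Q.shiftedTriple b) x := by
      gcongr
      exact le_iSup_of_le (k + 1) (PartitionTree.le_truncMax_of_mem_descendants f hS (hRS hx))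
    _ ≤ _ := by
      gcongr
      exact Finset.single_le_sum
        (f := fun b => ⨆ k, (dyadicTree d).truncMax f k (Q.shiftedTriple b) x)
        (fun _ _ => zero_le) (Finset.mem_univ b)

theorem lintegral_iSup_subcube_le (hK_top : K ≠ ∞) (hfm : ∀ Q, AEMeasurable (f Q))
    (hf : ∀ Q : HalfOpenCube d, ⨍⁻ x in Q, f Q x ∂volume ≤ A)
    (hu : ∀ Q : HalfOpenCube d, ⨍⁻ x in Q, u Q x ∂volume ≤ N)
    (hfu : ∀ (R S : HalfOpenCube d) (x), f R x ≤ (⨍⁻ y in R, u S y ∂volume) * f S x)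
    (hK : ∀ (R S : HalfOpenCube d) (x), R.toSet ⊆ S → S.side ≤ 6 * R.side →
      f R x ≤ K * f S x) (Q : HalfOpenCube d) :
    ∫⁻ x in Q, ⨆ (R : HalfOpenCube d) (_ : x ∈ R.toSet ∧ R.toSet ⊆ Q), f R x ≤
      K * (6 ^ d * (4 * N * A)) * volume Q.toSet := by
  let M (b : Fin d → Bool) (x : Fin d → ℝ) : ℝ≥0∞ :=
    ⨆ k, (dyadicTree d).truncMax f k (Q.shiftedTriple b) x
  have hMm (b : Fin d → Bool) : AEMeasurable (M b) :=
    .iSup fun k => PartitionTree.aemeasurable_truncMax hfm k _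
  have hM (b : Fin d → Bool) :
      ∫⁻ x in Q, M b x ≤ 4 * N * A * (3 ^ d * volume Q.toSet) := calc
    _ ≤ ∫⁻ x in Q.shiftedTriple b, M b x := lintegral_mono_set (Q.subset_shiftedTriple b)
    _ ≤ 4 * N * A * volume (Q.shiftedTriple b).toSet :=
      (dyadicTree d).lintegral_iSup_truncMax_le volume_ne_top hfm hf hu hfu _
    _ = _ := by rw [volume_shiftedTriple]
  calc
    _ ≤ ∫⁻ x in Q, K * ∑ b, M b x :=
      lintegral_mono fun x => iSup₂_le fun R hR => le_mul_sum_iSup_truncMax hK hR.1 hR.2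
    _ = K * ∑ b, ∫⁻ x in Q, M b x := by
      rw [lintegral_const_mul' _ _ hK_top, lintegral_finsetSum' _ fun b _ => (hMm b).restrict]
    _ ≤ K * ∑ _b : Fin d → Bool, 4 * N * A * (3 ^ d * volume Q.toSet) := by
      gcongr with b
      exact hM b
    _ = _ := by
      rw [Finset.sum_const, Finset.card_univ, Fintype.card_fun, Fintype.card_bool, Fintype.card_fin,
        nsmul_eq_mul, Nat.cast_pow, Nat.cast_ofNat, show (6 : ℝ≥0∞) = 2 * 3 by norm_num, mul_pow]
      ring

end MaximalFunction

end HalfOpenCube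

section FrobeniusNorm

open scoped Matrix.Norms.Frobenius

variable {m n p 𝕜 : Type*} [Fintype m] [Fintype n] [Fintype p] [RCLike 𝕜]

theorem frobenius_norm_sq (A : Matrix m n 𝕜) : ‖A‖ ^ 2 = ∑ i, ∑ j, ‖A i j‖ ^ 2 := by
  rw [frobenius_norm_def, ← Real.sqrt_eq_rpow, Real.sq_sqrt (by positivity)]
  simp only [Real.rpow_two]

theorem re_trace_conjTranspose_mul_self (A : Matrix m n 𝕜) :
    RCLike.re (Aᴴ * A).trace = ‖A‖ ^ 2 := by
  rw [frobenius_norm_sq, Finset.sum_comm]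
  simp only [trace, diag, mul_apply, conjTranspose_apply, map_sum, RCLike.star_def,
    RCLike.conj_mul]
  norm_cast

theorem re_trace_conjTranspose_mul_self_mul (X : Matrix m n 𝕜) (Y : Matrix n p 𝕜) :
    RCLike.re ((Xᴴ * X) * (Y * Yᴴ)).trace = ‖X * Y‖ ^ 2 := by
  rw [← re_trace_conjTranspose_mul_self, conjTranspose_mul, ← Matrix.mul_assoc, trace_mul_comm]
  simp only [Matrix.mul_assoc]

theorem exists_conjTranspose_mul_self_eq {A : Matrix n n 𝕜} (hA : A.PosSemidef) :
    ∃ X : Matrix n n 𝕜, Xᴴ * X = A := by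
  classical
  open scoped MatrixOrder Matrix.Norms.L2Operator in
  obtain ⟨X, hX⟩ := CStarAlgebra.nonneg_iff_eq_star_mul_self.1 hA.nonneg
  exact ⟨X, hX.symm⟩

theorem re_trace_mul_nonneg {A B : Matrix n n 𝕜} (hA : A.PosSemidef) (hB : B.PosSemidef) :
    0 ≤ RCLike.re (A * B).trace := by
  obtain ⟨X, rfl⟩ := exists_conjTranspose_mul_self_eq hA
  obtain ⟨Y, rfl⟩ := exists_conjTranspose_mul_self_eq hB
  have h := re_trace_conjTranspose_mul_self_mul X Yᴴ
  rw [conjTranspose_conjTranspose] at h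
  exact h ▸ sq_nonneg _

/- With `W = Xᴴ X`, `A = Yᴴ Y` and `B = Zᴴ Z`, this is submultiplicativity of the Frobenius norm
for the factorization `X Yᴴ = (X Zᴴ) (Z⁻ᴴ Yᴴ)`. -/
theorem re_trace_mul_le_re_trace_inv_mul [DecidableEq n] {W A B : Matrix n n 𝕜}
    (hW : W.PosSemidef) (hA : A.PosSemidef) (hB : B.PosDef) :
    RCLike.re (W * A).trace ≤ RCLike.re (B⁻¹ * A).trace * RCLike.re (W * B).trace := by
  obtain ⟨X, rfl⟩ := exists_conjTranspose_mul_self_eq hW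
  obtain ⟨Y, rfl⟩ := exists_conjTranspose_mul_self_eq hA
  obtain ⟨Z, rfl⟩ := exists_conjTranspose_mul_self_eq hB.posSemidef
  have hZ : IsUnit Zᴴ.det := by
    have := (isUnit_iff_isUnit_det _).1 hB.isUnit
    rw [det_mul] at this
    exact isUnit_of_mul_isUnit_left this
  have hfactor : X * Yᴴ = X * Zᴴ * (Zᴴ⁻¹ * Yᴴ) := by
    rw [Matrix.mul_assoc, ← Matrix.mul_assoc Zᴴ, mul_nonsing_inv _ hZ, Matrix.one_mul]
  have htrace (S T : Matrix n n 𝕜) : RCLike.re (Sᴴ * S * (Tᴴ * T)).trace = ‖S * Tᴴ‖ ^ 2 := by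
    simpa only [conjTranspose_conjTranspose] using re_trace_conjTranspose_mul_self_mul S Tᴴ
  have hinv : (Zᴴ * Z)⁻¹ = Zᴴ⁻¹ᴴ * Zᴴ⁻¹ := by
    rw [Matrix.mul_inv_rev, conjTranspose_nonsing_inv, conjTranspose_conjTranspose]
  rw [hinv, htrace, htrace, htrace, hfactor, ← mul_pow, mul_comm ‖Zᴴ⁻¹ * Yᴴ‖]
  gcongr
  exact frobenius_norm_mul _ _

theorem norm_toEuclideanCLM_le_frobenius_norm [DecidableEq n] (A : Matrix n n 𝕜) :
    ‖toEuclideanCLM (𝕜 := 𝕜) A‖ ≤ ‖A‖ := by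
  refine ContinuousLinearMap.opNorm_le_bound _ (norm_nonneg A) fun v => ?_
  have h := frobenius_norm_mul A (replicateCol Unit v.ofLp)
  rwa [← replicateCol_mulVec, frobenius_norm_replicateCol, frobenius_norm_replicateCol,
    ← toEuclideanCLM_toLp] at h

theorem frobenius_norm_sq_le_card_mul [DecidableEq n] (A : Matrix n n 𝕜) :
    ‖A‖ ^ 2 ≤ Fintype.card n * ‖toEuclideanCLM (𝕜 := 𝕜) A‖ ^ 2 := by
  have hcol (j : n) : ∑ i, ‖A i j‖ ^ 2 ≤ ‖toEuclideanCLM (𝕜 := 𝕜) A‖ ^ 2 := by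
    have h := (toEuclideanCLM (𝕜 := 𝕜) A).le_opNorm (EuclideanSpace.single j 1)
    rw [PiLp.norm_single, norm_one, mul_one] at h
    calc
      _ = ‖toEuclideanCLM (𝕜 := 𝕜) A (EuclideanSpace.single j 1)‖ ^ 2 := by
        simp [EuclideanSpace.norm_sq_eq]
      _ ≤ _ := by gcongr
  rw [frobenius_norm_sq, Finset.sum_comm]
  calc
    _ ≤ ∑ _j : n, ‖toEuclideanCLM (𝕜 := 𝕜) A‖ ^ 2 := Finset.sum_le_sum fun j _ => hcol j
    _ = _ := by rw [Finset.sum_const, Finset.card_univ, nsmul_eq_mul]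

end FrobeniusNorm

section MatrixAverage

variable {d n : ℕ} {I : Set (Fin d → ℝ)} {G : (Fin d → ℝ) → Matrix (Fin n) (Fin n) ℂ}

theorem integrable_trace_mul {α m 𝕜 : Type*} [Fintype m] [RCLike 𝕜] [MeasurableSpace α]
    {μ : Measure α} {G : α → Matrix m m 𝕜} (hG : ∀ i j, Integrable (fun x => G x i j) μ)
    (B : Matrix m m 𝕜) : Integrable (fun x => (B * G x).trace) μ := by
  simp only [trace, diag, mul_apply]
  exact integrable_finsetSum _ fun i _ => integrable_finsetSum _ fun j _ => (hG j i).const_mul _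

theorem trace_mul_mavg (hG : ∀ i j, IntegrableOn (fun x => G x i j) I)
    (B : Matrix (Fin n) (Fin n) ℂ) :
    (B * mavg I G).trace = (volume I).toReal⁻¹ • ∫ x in I, (B * G x).trace := by
  have hterm (i j : Fin n) : IntegrableOn (fun x => B i j * G x j i) I := (hG j i).const_mul _
  simp only [trace, diag, mul_apply, mavg, of_apply]
  rw [integral_finsetSum _ fun i _ => integrable_finsetSum _ fun j _ => hterm i j, Finset.smul_sum]
  refine Finset.sum_congr rfl fun i _ => ?_
  rw [integral_finsetSum _ fun j _ => hterm i j, Finset.smul_sum]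
  refine Finset.sum_congr rfl fun j _ => ?_
  rw [integral_const_mul, mul_smul_comm]

theorem setLAverage_ofReal_re_trace_mul {B : Matrix (Fin n) (Fin n) ℂ} (hB : B.PosSemidef)
    (hG : ∀ x, (G x).PosSemidef) (hGi : ∀ i j, IntegrableOn (fun x => G x i j) I)
    (hI : volume I ≠ 0) (hI' : volume I ≠ ∞) :
    ⨍⁻ x in I, ENNReal.ofReal (B * G x).trace.re ∂volume =
      ENNReal.ofReal (B * mavg I G).trace.re := by
  have hint : IntegrableOn (fun x => (B * G x).trace) I := integrable_trace_mul hGi B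
  have hint_re : IntegrableOn (fun x => (B * G x).trace.re) I := hint.re
  have hnonneg (x : Fin d → ℝ) : 0 ≤ (B * G x).trace.re := re_trace_mul_nonneg hB (hG x)
  have hre : ∫ x in I, (B * G x).trace.re = (∫ x in I, (B * G x).trace).re := integral_re hint
  rw [setLAverage_eq, ← ofReal_integral_eq_lintegral_ofReal hint_re (.of_forall hnonneg), hre,
    trace_mul_mavg hGi, Complex.smul_re, smul_eq_mul, mul_comm _ (Complex.re _),
    ENNReal.ofReal_mul' (by positivity), ENNReal.ofReal_inv_of_pos (ENNReal.toReal_pos hI hI'),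
    ENNReal.ofReal_toReal hI', div_eq_mul_inv]

end MatrixAverage

theorem HalfOpenCube.lintegral_iSup_re_trace_mul_mavg_le {d n : ℕ}
    {W V : (Fin d → ℝ) → Matrix (Fin n) (Fin n) ℂ} (hW : ∀ x, (W x).PosSemidef)
    (hV : ∀ x, (V x).PosSemidef)
    (hWi : ∀ (Q : HalfOpenCube d) (i j), IntegrableOn (fun x => W x i j) Q)
    (hVi : ∀ (Q : HalfOpenCube d) (i j), IntegrableOn (fun x => V x i j) Q)
    (hVavg : ∀ Q : HalfOpenCube d, (mavg Q V).PosDef) {A : ℝ}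
    (hA : ∀ Q : HalfOpenCube d, (mavg Q W * mavg Q V).trace.re ≤ A) (Q : HalfOpenCube d) :
    ∫⁻ x in Q, ⨆ (R : HalfOpenCube d) (_ : x ∈ R.toSet ∧ R.toSet ⊆ Q),
        ENNReal.ofReal (W x * mavg R V).trace.re ≤
      6 ^ d * (6 ^ d * (4 * n * ENNReal.ofReal A)) * volume Q.toSet := by
  have haverage {B : Matrix (Fin n) (Fin n) ℂ} (hB : B.PosSemidef) (R : HalfOpenCube d) :
      ⨍⁻ y in R, ENNReal.ofReal (B * V y).trace.re ∂volume =
        ENNReal.ofReal (B * mavg R V).trace.re :=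
    setLAverage_ofReal_re_trace_mul hB hV (hVi R) R.volume_ne_zero R.volume_ne_top
  have hVinv (S : HalfOpenCube d) : (mavg S V)⁻¹.PosSemidef := (hVavg S).inv.posSemidef
  refine lintegral_iSup_subcube_le (f := fun R x => ENNReal.ofReal (W x * mavg R V).trace.re)
    (u := fun S y => ENNReal.ofReal ((mavg S V)⁻¹ * V y).trace.re)
    (ENNReal.pow_ne_top ENNReal.ofNat_ne_top) (fun R => ?measurable) (fun R => ?average_f)
    (fun R => ?average_u) (fun R S x => ?comparison) (fun R S x hRS hside => ?doubling) Q
  case measurable =>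
    refine aemeasurable_of_forall_restrict fun Q => ?_
    simp only [trace_mul_comm (W _)]
    exact (integrable_trace_mul (hWi Q) _).re.aemeasurable.ennreal_ofReal
  case average_f =>
    simp only [trace_mul_comm (W _)]
    rw [setLAverage_ofReal_re_trace_mul (hVavg R).posSemidef hW (hWi R) R.volume_ne_zero
      R.volume_ne_top, trace_mul_comm]
    exact ENNReal.ofReal_le_ofReal (hA R)
  case average_u =>
    rw [haverage (hVinv R), nonsing_inv_mul _ ((isUnit_iff_isUnit_det _).1 (hVavg R).isUnit),
      trace_one, Fintype.card_fin, Complex.natCast_re, ENNReal.ofReal_natCast]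
  case comparison =>
    have hnonneg : 0 ≤ ((mavg S V)⁻¹ * mavg R V).trace.re :=
      re_trace_mul_nonneg (hVinv S) (hVavg R).posSemidef
    rw [haverage (hVinv S), ← ENNReal.ofReal_mul hnonneg]
    exact ENNReal.ofReal_le_ofReal
      (re_trace_mul_le_re_trace_inv_mul (hW x) (hVavg R).posSemidef (hVavg S))
  case doubling =>
    rw [← haverage (hW x), ← haverage (hW x)]
    exact setLAverage_le_pow_mul hRS (c := 6) hside _

section SquareRoots

variable {n : ℕ} {S T W V : Matrix (Fin n) (Fin n) ℂ}

theorem matNorm_nonneg (M : Matrix (Fin n) (Fin n) ℂ) : 0 ≤ matNorm M :=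
  norm_nonneg _

open scoped Matrix.Norms.Frobenius in
theorem re_trace_mul_eq_frobenius_norm_sq (hS : S.IsHermitian) (hT : T.IsHermitian)
    (hSW : S * S = W) (hTV : T * T = V) : (W * V).trace.re = ‖S * T‖ ^ 2 := by
  have h := re_trace_conjTranspose_mul_self_mul S T
  rwa [hS.eq, hT.eq, hSW, hTV] at h

theorem matNorm_sq_le_re_trace_mul (hS : S.IsHermitian) (hT : T.IsHermitian)
    (hSW : S * S = W) (hTV : T * T = V) : matNorm (S * T) ^ 2 ≤ (W * V).trace.re := by
  rw [re_trace_mul_eq_frobenius_norm_sq hS hT hSW hTV]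
  exact pow_le_pow_left₀ (norm_nonneg _) (norm_toEuclideanCLM_le_frobenius_norm _) 2

theorem re_trace_mul_le_mul_matNorm_sq (hS : S.IsHermitian) (hT : T.IsHermitian)
    (hSW : S * S = W) (hTV : T * T = V) : (W * V).trace.re ≤ n * matNorm (S * T) ^ 2 := by
  rw [re_trace_mul_eq_frobenius_norm_sq hS hT hSW hTV]
  simpa only [Fintype.card_fin, matNorm] using frobenius_norm_sq_le_card_mul (S * T)

theorem iSup_matNorm_sq_le {d : ℕ} {Q : Set (Fin d → ℝ)} {x : Fin d → ℝ}
    {T : Set (Fin d → ℝ) → Matrix (Fin n) (Fin n) ℂ}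
    {G : (Fin d → ℝ) → Matrix (Fin n) (Fin n) ℂ} (hS : S.IsHermitian) (hSW : S * S = W)
    (hT : ∀ I, IsCube I → (T I).IsHermitian ∧ T I * T I = mavg I G) :
    (⨆ (R : Set (Fin d → ℝ)) (_ : IsCube R ∧ x ∈ R ∧ R ⊆ Q),
        ENNReal.ofReal (matNorm (S * T R))) ^ 2 ≤
      ⨆ (R : HalfOpenCube d) (_ : x ∈ R.toSet ∧ R.toSet ⊆ Q),
        ENNReal.ofReal (W * mavg R G).trace.re := by
  simp only [ENNReal.iSup_pow_of_ne_zero two_ne_zero]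
  refine iSup₂_le fun I ⟨hI, hx, hIQ⟩ => ?_
  obtain ⟨R, rfl⟩ := HalfOpenCube.exists_toSet_eq hI
  obtain ⟨hTR, hTG⟩ := hT R hI
  refine le_iSup₂_of_le R ⟨hx, hIQ⟩ ?_
  rw [← ENNReal.ofReal_pow (matNorm_nonneg _)]
  exact ENNReal.ofReal_le_ofReal (matNorm_sq_le_re_trace_mul hS hTR hSW hTG)

end SquareRoots

theorem stmt19_general {d n : ℕ} :
    ∃ c : ℝ, 0 < c ∧
      ∀ W V Whalf : (Fin d → ℝ) → Matrix (Fin n) (Fin n) ℂ,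
        (∀ x, (V x).PosSemidef) →
        (∀ x, (Whalf x).PosSemidef ∧ Whalf x * Whalf x = W x) →
      ∀ Sq Tq : Set (Fin d → ℝ) → Matrix (Fin n) (Fin n) ℂ,
        (∀ I, IsCube I → (Sq I).PosSemidef ∧ Sq I * Sq I = mavg I W) →
        (∀ I, IsCube I → (Tq I).PosDef ∧ Tq I * Tq I = mavg I V) →
      (∀ I, IsCube I → ∀ i j, IntegrableOn (fun x => W x i j) I volume) →
      (∀ I, IsCube I → ∀ i j, IntegrableOn (fun x => V x i j) I volume) →
      ∀ A : ℝ, (∀ I, IsCube I → matNorm (Sq I * Tq I) ^ 2 ≤ A) →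
      ∀ Q : Set (Fin d → ℝ), IsCube Q →
        (∫⁻ x in Q,
            (⨆ (R : Set (Fin d → ℝ)) (_ : IsCube R ∧ x ∈ R ∧ R ⊆ Q),
              ENNReal.ofReal (matNorm (Whalf x * Tq R))) ^ (2 : ℕ))
          ≤ ENNReal.ofReal (c * A) * volume Q := by
  refine ⟨6 ^ d * (6 ^ d * (4 * n * n)) + 1, by positivity, ?_⟩
  intro W V Whalf hV hWhalf Sq Tq hSq hTq hWi hVi A hA I hI
  obtain ⟨Q, rfl⟩ := HalfOpenCube.exists_toSet_eq hI
  have hA_nonneg : 0 ≤ A := (sq_nonneg _).trans (hA _ hI)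
  have hW (x : Fin d → ℝ) : (W x).PosSemidef := by
    rw [← (hWhalf x).2, ← pow_two]
    exact (hWhalf x).1.pow 2
  have hVavg (R : HalfOpenCube d) : (mavg R V).PosDef := by
    rw [← (hTq R R.isCube).2, ← pow_two]
    have hT := (hTq R R.isCube).1
    exact (hT.posSemidef.pow 2).posDef_iff_isUnit.2 (hT.isUnit.pow 2)
  have htrace (R : HalfOpenCube d) : (mavg R W * mavg R V).trace.re ≤ n * A := by
    obtain ⟨hS, hSW⟩ := hSq R R.isCube
    obtain ⟨hT, hTV⟩ := hTq R R.isCube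
    refine (re_trace_mul_le_mul_matNorm_sq hS.isHermitian hT.isHermitian hSW hTV).trans ?_
    gcongr
    exact hA R R.isCube
  calc
    _ ≤ ∫⁻ x in Q, ⨆ (R : HalfOpenCube d) (_ : x ∈ R.toSet ∧ R.toSet ⊆ Q),
          ENNReal.ofReal (W x * mavg R V).trace.re :=
      lintegral_mono fun x => iSup_matNorm_sq_le (hWhalf x).1.isHermitian (hWhalf x).2
        fun I hI => (hTq I hI).imp_left PosDef.isHermitian
    _ ≤ 6 ^ d * (6 ^ d * (4 * n * ENNReal.ofReal (n * A))) * volume Q.toSet :=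
      HalfOpenCube.lintegral_iSup_re_trace_mul_mavg_le hW hV (fun R => hWi R R.isCube)
        (fun R => hVi R R.isCube) hVavg htrace Q
    _ = ENNReal.ofReal (6 ^ d * (6 ^ d * (4 * n * n)) * A) * volume Q.toSet := by
      rw [show 6 ^ d * (6 ^ d * (4 * n * n)) * A = 6 ^ d * (6 ^ d * (4 * n * (n * A))) by ring]
      simp [ENNReal.ofReal_mul, ENNReal.ofReal_pow]
    _ ≤ _ := by gcongr; linarith

/-- Integral bound on the local maximal eigenvalue comparison: for a matrix `A₂` weight `W`
(characteristic at most `Cw`) and a cube `Q`, with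
`N_Q(x) = sup_{x ∈ R ⊆ Q} ‖W^{1/2}(x)(m_R(W⁻¹))^{1/2}‖` (supremum over subcubes `R` of `Q`
containing `x`), one has `∫_Q N_Q(x)² dx ≲ |Q| Cw`, with constant depending only on `n`, `d`.
`Whalf = W^{1/2}` and `Sq I, Tq I` are the positive square roots of `m_I W, m_I(W⁻¹)`. -/
theorem stmt19 {d n : ℕ} :
    ∃ c : ℝ, 0 < c ∧
      ∀ (W Whalf : (Fin d → ℝ) → Matrix (Fin n) (Fin n) ℂ),
        (∀ x, (W x).PosDef) →
        (∀ x, (Whalf x).PosDef ∧ Whalf x * Whalf x = W x) →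
      ∀ Sq Tq : Set (Fin d → ℝ) → Matrix (Fin n) (Fin n) ℂ,
        (∀ I, IsCube I → (Sq I).PosDef ∧ Sq I * Sq I = mavg I W) →
        (∀ I, IsCube I → (Tq I).PosDef ∧ Tq I * Tq I = mavg I fun y => (W y)⁻¹) →
      (∀ I, IsCube I → ∀ i j, IntegrableOn (fun x => W x i j) I volume) →
      (∀ I, IsCube I → ∀ i j, IntegrableOn (fun x => (W x)⁻¹ i j) I volume) →
      ∀ Cw : ℝ, 1 ≤ Cw →
      (∀ I, IsCube I → matNorm (Sq I * Tq I) ^ 2 ≤ Cw) →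
      ∀ Q : Set (Fin d → ℝ), IsCube Q →
        (∫⁻ x in Q,
            (⨆ (R : Set (Fin d → ℝ)) (_ : IsCube R ∧ x ∈ R ∧ R ⊆ Q),
              ENNReal.ofReal (matNorm (Whalf x * Tq R))) ^ (2 : ℕ))
          ≤ ENNReal.ofReal (c * Cw) * volume Q := by
  obtain ⟨c, hc, hbound⟩ := stmt19_general
  exact ⟨c, hc, fun W Whalf hW hWhalf Sq Tq hSq hTq hWi hVi Cw _ =>
    hbound W (fun y => (W y)⁻¹) Whalf (fun y => (hW y).inv.posSemidef)
      (fun x => (hWhalf x).imp_left PosDef.posSemidef) Sq Tq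
      (fun I hI => (hSq I hI).imp_left PosDef.posSemidef) hTq hWi hVi Cw⟩
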